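/- Let L be a real symmetric positive semidefinite n×n matrix whose kernel is exactly the span of the all-ones vector 𝟙 (i.e. L·x = 0 if and only if x is a scalar multiple of 𝟙). Let a ≠ b be indices, v = e_a − e_b, let M be the Moore–Penrose pseudoinverse of L, and let M' be the Moore–Penrose pseudoinverse of L + v·vᵀ. Then tr(M') < tr(M). -/

import Mathlib

open Matrix

/-- `M` is the Moore–Penrose pseudoinverse of `L`. -/
def IsMoorePenroseInv {n : ℕ} (L M : Matrix (Fin n) (Fin n) ℝ) : Prop :=
  L * M * L = L ∧ M * L * M = M ∧ (L * M)ᵀ = L * M ∧ (M * L)ᵀ = M * L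

theorem mp_unique {n : ℕ} {L M N : Matrix (Fin n) (Fin n) ℝ}
    (hM : IsMoorePenroseInv L M) (hN : IsMoorePenroseInv L N) : M = N := by
  obtain ⟨m1, m2, m3, m4⟩ := hM
  obtain ⟨n1, n2, n3, n4⟩ := hN
  have h1 : L * M = L * N := by
    calc L * M = (L * N) * (L * M) := by rw [← Matrix.mul_assoc, n1]
      _ = ((L * M) * (L * N))ᵀ := by rw [transpose_mul, m3, n3]
      _ = (L * N)ᵀ := by rw [← Matrix.mul_assoc, m1]
      _ = L * N := n3
  have h2 : M * L = N * L := by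
    calc M * L = (M * L) * (N * L) := by rw [Matrix.mul_assoc, ← Matrix.mul_assoc L, n1]
      _ = ((N * L) * (M * L))ᵀ := by rw [transpose_mul, m4, n4]
      _ = (N * L)ᵀ := by rw [Matrix.mul_assoc, ← Matrix.mul_assoc L, m1]
      _ = N * L := n4
  calc M = M * L * M := m2.symm
    _ = N * L * N := by rw [Matrix.mul_assoc, h1, ← Matrix.mul_assoc, h2]
    _ = N := n2

theorem mp_symm {n : ℕ} {L M : Matrix (Fin n) (Fin n) ℝ} (hL : Lᵀ = L)
    (hM : IsMoorePenroseInv L M) : Mᵀ = M := by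
  refine mp_unique (L := L) ?_ hM
  obtain ⟨m1, m2, m3, m4⟩ := hM
  have e1 : L * Mᵀ = M * L := by rw [← m4, transpose_mul, hL]
  have e2 : Mᵀ * L = L * M := by rw [← m3, transpose_mul, hL]
  refine ⟨?_, ?_, ?_, ?_⟩
  · have := congrArg transpose m1
    rwa [transpose_mul, transpose_mul, hL, ← Matrix.mul_assoc] at this
  · have := congrArg transpose m2
    rwa [transpose_mul, transpose_mul, hL, ← Matrix.mul_assoc] at this
  · rw [e1, m4]
  · rw [e2, m3]

theorem trace_strictly_decreases_on_edge_insertion {n : ℕ}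
    (L : Matrix (Fin n) (Fin n) ℝ) (hL : L.PosSemidef)
    (hker : ∀ x : Fin n → ℝ,
      L.mulVec x = 0 ↔ ∃ c : ℝ, x = c • (fun _ => (1 : ℝ)))
    (a b : Fin n) (hab : a ≠ b)
    (M M' : Matrix (Fin n) (Fin n) ℝ)
    (hM : IsMoorePenroseInv L M)
    (hM' : IsMoorePenroseInv
      (L + vecMulVec (Pi.single a 1 - Pi.single b 1)
        (Pi.single a 1 - Pi.single b 1)) M') :
    M'.trace < M.trace := by
  have hLT : Lᵀ = L := by simpa using hL.1.eq
  have hMT : Mᵀ = M := mp_symm hLT hM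
  set v : Fin n → ℝ := Pi.single a 1 - Pi.single b 1 with hv
  have hM0 := hM
  obtain ⟨m1, m2, m3, m4⟩ := hM
  have hcomm : L * M = M * L := by rw [← m3, transpose_mul, hLT, hMT]
  have hv0 : v ≠ 0 := by
    intro h
    have := congrFun h a
    simp [hv, hab] at this
  -- `M L v = v`
  have hMLv : (L * M) *ᵥ v = v := by
    have hP : L * (1 - L * M) = 0 := by
      rw [hcomm, Matrix.mul_sub, ← Matrix.mul_assoc, m1, Matrix.mul_one, sub_self]
    have hcol : ∀ j, ∀ i, (1 - L * M) i j = (1 - L * M) a j := by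
      intro j i
      have h0 : L *ᵥ (fun i => (1 - L * M) i j) = 0 := by
        ext i
        exact congrFun (congrFun hP i) j
      obtain ⟨c, hc⟩ := (hker _).1 h0
      have h1 := congrFun hc i
      have h2 := congrFun hc a
      simp only [Pi.smul_apply] at h1 h2
      rw [h1, h2]
    have hsym : (1 - L * M)ᵀ = 1 - L * M := by rw [transpose_sub, m3, transpose_one]
    have hz : (1 - L * M) *ᵥ v = 0 := by
      ext i
      have e : (1 - L * M) i a = (1 - L * M) i b := by
        rw [← hsym, transpose_apply, transpose_apply, hcol i b]
      rw [hv, mulVec_sub, mulVec_single_one, mulVec_single_one]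
      simpa [sub_eq_zero] using e
    rw [sub_mulVec, one_mulVec, sub_eq_zero] at hz
    exact hz.symm
  set w := M *ᵥ v with hw
  have hLw : L *ᵥ w = v := by rw [hw, mulVec_mulVec, hMLv]
  have hw0 : w ≠ 0 := by
    intro h
    rw [h, mulVec_zero] at hLw
    exact hv0 hLw.symm
  have hMLw : (M * L) *ᵥ w = w := by rw [hw, mulVec_mulVec, m2]
  have hr : 0 ≤ v ⬝ᵥ w := by
    have := hL.dotProduct_mulVec_nonneg w
    rw [hLw, star_trivial, dotProduct_comm] at this
    exact this
  set r := v ⬝ᵥ w with hrdef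
  have hr1 : (1 + r) ≠ 0 := by positivity
  set N := M - (1 + r)⁻¹ • vecMulVec w w with hN
  have hNT : Nᵀ = N := by
    rw [hN, transpose_sub, transpose_smul, hMT, transpose_vecMulVec]
  have hvM : v ᵥ* M = w := by rw [← mulVec_transpose, hMT]
  set L' := L + vecMulVec v v with hL'
  have hLT' : L'ᵀ = L' := by rw [hL', transpose_add, hLT, transpose_vecMulVec]
  have k1 : L' * N = L * M := by
    rw [hL', hN, Matrix.add_mul, Matrix.mul_sub, Matrix.mul_sub, Matrix.mul_smul, Matrix.mul_smul,
      mul_vecMulVec, hLw, vecMulVec_mul, hvM, vecMulVec_mul_vecMulVec, ← hrdef, vecMulVec_smul]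
    have : (vecMulVec v w) = (1 + r)⁻¹ • vecMulVec v w + (1 + r)⁻¹ • r • vecMulVec v w := by
      rw [smul_smul, ← add_smul, ← mul_one_add, inv_mul_cancel₀ hr1, one_smul]
    nth_rewrite 2 [this]
    abel
  have k2 : N * L' = L * M := by
    rw [← m3, ← k1, transpose_mul, hNT, hLT']
  have hNmp : IsMoorePenroseInv L' N := by
    refine ⟨?_, ?_, ?_, ?_⟩
    · rw [k1, hL', Matrix.mul_add, m1, mul_vecMulVec, hMLv]
    · rw [k2, hcomm, hN, Matrix.mul_sub, m2, Matrix.mul_smul, mul_vecMulVec, hMLw]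
    · rw [k1, m3]
    · rw [k2, m3]
  rw [mp_unique hM' hNmp, hN, trace_sub, trace_smul, trace_vecMulVec, smul_eq_mul]
  have hww : 0 < w ⬝ᵥ w := by
    have := (dotProduct_star_self_pos_iff (v := w)).2 hw0
    simpa using this
  have : 0 < (1 + r)⁻¹ * (w ⬝ᵥ w) := by positivity
  linarith
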